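/- Let A be a unital complex *-algebra, q a nonzero real number, and x₀ = x₀*, x₁, …, x_n ∈ A. Let u''_{(2n+1)} be the 2^{n+1} × 2^{n+1} matrix obtained from the odd unipotent u_{(2n+1)} (built from generators labelled x₁, …, x_{n+1}) by substituting x₁ ↦ x₀, x₁* ↦ x₀, and x_{j+1} ↦ x_j for j = 1, …, n. Then u''_{(2n+1)} equals the matrix obtained from u_{(2n)} by replacing the generator x₀ with the 2 × 2 matrix [[0, x₀],[x₀, 0]] and each generator x_j (j ≥ 1) with x_j·I₂ (i.e. the entrywise Kronecker substitution of u_{(2n)} with these 2 × 2 blocks). Consequently the unipotency of u''_{(2n+1)} yields exactly the S^{2n}_q relations, so A(S^{2n}_q) is the quotient of A(S^{2n+1}_q) by the *-ideal generated by x₁ − x₁*. -/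

import Mathlib

/-- Partial radii for the quantum Euclidean space/even sphere:
`s 0 = x₀ * x₀` and `s (i+1) = s i + (x (i+1))* * x (i+1)`. -/
def sEven {A : Type*} [Ring A] [StarRing A] (x : ℕ → A) : ℕ → A
  | 0 => x 0 * x 0
  | i + 1 => sEven x i + star (x (i + 1)) * x (i + 1)

/-- The defining relations of the even quantum Euclidean sphere `S^{2n}_q`. -/
def EvenSphereRel {A : Type*} [Ring A] [Algebra ℂ A] [StarRing A]
    (q : ℝ) (n : ℕ) (x : ℕ → A) : Prop :=
  (∀ i j : ℕ, i < j → j ≤ n → x i * x j = (q : ℂ) • (x j * x i)) ∧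
  (∀ i j : ℕ, i ≤ n → j ≤ n → i ≠ j →
    star (x i) * x j = (q : ℂ) • (x j * star (x i))) ∧
  (∀ i : ℕ, 1 ≤ i → i ≤ n →
    x i * star (x i) - star (x i) * x i = (1 - ((q : ℂ) ^ 2)⁻¹) • sEven x (i - 1)) ∧
  sEven x n = 1

/-- The recursively defined matrices `u_{(2k)}`:  `u_{(0)} = x₀` and
`u_{(2k)} = [[q⁻¹ u_{(2k-2)}, x_k · 1], [x_k* · 1, -u_{(2k-2)}]]`, as `2^k × 2^k`
matrices over `A`.  The odd matrix `u_{(2k-1)}` is obtained by substituting `x₀ ↦ 0`. -/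
noncomputable def uMat {A : Type*} [Ring A] [Algebra ℂ A] [StarRing A] (q : ℝ) (x : ℕ → A) :
    (k : ℕ) → Matrix (Fin (2 ^ k)) (Fin (2 ^ k)) A
  | 0 => Matrix.of fun _ _ => x 0
  | k + 1 =>
    Matrix.reindex (finSumFinEquiv.trans (finCongr (by rw [pow_succ, mul_two])))
      (finSumFinEquiv.trans (finCongr (by rw [pow_succ, mul_two])))
      (Matrix.fromBlocks ((q : ℂ)⁻¹ • uMat q x k)
        (x (k + 1) • (1 : Matrix (Fin (2 ^ k)) (Fin (2 ^ k)) A))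
        (star (x (k + 1)) • (1 : Matrix (Fin (2 ^ k)) (Fin (2 ^ k)) A))
        (-uMat q x k))

/-!
Squaring one step of the recursion shows that `u_{(2k)}² = c` holds exactly when `x_k` `q`-commutes
with the entries of `u_{(2k-2)}`, `[x_k, x_k*] = (1 - q⁻²)(c - x_k* x_k)`, and
`u_{(2k-2)}² = c - x_k* x_k`; by induction on `k`, with `c` varying, unipotency is equivalent to
the sphere relations. The entries of `u_{(2k-2)}` span the same space as the generators and their
adjoints, which is how relations between matrices become relations between generators.

Stopping the recursion one step early exhibits `u_{(2n+2)}` as `u_{(2n)}` with its bottom generator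
replaced by the `2 × 2` matrix `u_{(2)}`, and for the substituted generators this matrix
is `[[0, x₀], [x₀, 0]]`.
-/

section ScalarMatrices

open Matrix

variable {A m : Type*} [Semiring A] [DecidableEq m]

theorem smul_one_matrix_injective [Nonempty m] :
    Function.Injective fun a : A => a • (1 : Matrix m m A) := by
  simp only [smul_one_eq_diagonal]
  exact diagonal_injective.comp Function.const_injective

theorem star_smul_one_matrix [StarRing A] (a : A) :
    star (a • (1 : Matrix m m A)) = star a • 1 := by
  simp_rw [smul_one_eq_diagonal, star_eq_conjTranspose, diagonal_conjTranspose, Pi.star_def]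

end ScalarMatrices

section UnipotentBlock

open Matrix

variable {K A m κ : Type*} [Field K] [Ring A] [Algebra K A] [DecidableEq m] [DecidableEq κ]

/-- One step of the recursion for the unipotents, on the index type `m ⊕ m`: from `u` and the
generator `a` it forms `[[q⁻¹ u, a · 1], [b · 1, -u]]`. The adjoint of `a` enters as an independent
element `b`, so that `A` need not have an involution. -/
def unipotentBlock (q : K) (u : Matrix m m A) (a b : A) : Matrix (m ⊕ m) (m ⊕ m) A :=
  fromBlocks (q⁻¹ • u) (a • 1) (b • 1) (-u)

theorem unipotentBlock_mem_iff [Nonempty m] {q : K} {u : Matrix m m A} {a b : A}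
    (S : Submodule K A) :
    (∀ i j, unipotentBlock q u a b i j ∈ S) ↔ (∀ i j, u i j ∈ S) ∧ a ∈ S ∧ b ∈ S := by
  obtain ⟨z⟩ := ‹Nonempty m›
  constructor
  · intro h
    exact ⟨fun i j => by simpa [unipotentBlock] using h (.inr i) (.inr j),
      by simpa [unipotentBlock] using h (.inl z) (.inr z),
      by simpa [unipotentBlock] using h (.inr z) (.inl z)⟩
  · rintro ⟨hu, ha, hb⟩ (i | i) (j | j)
    · exact S.smul_mem _ (hu i j)
    · obtain rfl | hij := eq_or_ne i j <;> simp [unipotentBlock, *]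
    · obtain rfl | hij := eq_or_ne i j <;> simp [unipotentBlock, *]
    · exact S.neg_mem (hu i j)

theorem unipotentBlock_reindex {l : Type*} [DecidableEq l] (e : l ≃ m) (q : K) (u : Matrix l l A)
    (a b : A) :
    unipotentBlock q (reindex e e u) a b =
      reindex (e.sumCongr e) (e.sumCongr e) (unipotentBlock q u a b) := by
  ext (i | i) (j | j) <;> simp [unipotentBlock, one_apply]

theorem reindex_comp_unipotentBlock [Fintype κ] (q : K) (u : Matrix m m (Matrix κ κ A))
    (a b : A) :
    reindex (Equiv.sumProdDistrib m m κ) (Equiv.sumProdDistrib m m κ)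
        (comp _ _ _ _ A (unipotentBlock q u (a • 1) (b • 1))) =
      unipotentBlock q (comp _ _ _ _ A u) a b := by
  have comp_smul_one (d : A) : comp m m κ κ A ((d • (1 : Matrix κ κ A)) • 1) = d • 1 := by
    simp_rw [smul_one_eq_diagonal, comp_diagonal_diagonal]
  ext (⟨i, s⟩ | ⟨i, s⟩) (⟨j, t⟩ | ⟨j, t⟩)
  · rfl
  · exact congrFun₂ (comp_smul_one a) (i, s) (j, t)
  · exact congrFun₂ (comp_smul_one b) (i, s) (j, t)
  · rfl

variable [Fintype m]

theorem inv_smul_mul_add_mul_neg_eq_zero_iff {q : K} (hq : q ≠ 0) (u : Matrix m m A) (a : A) :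
    (q⁻¹ • u) * (a • 1) + (a • 1) * -u = 0 ↔ ∀ i j, u i j * a = q • (a * u i j) := by
  simp only [← Matrix.ext_iff, smul_one_eq_diagonal, smul_mul_assoc, mul_neg, ← sub_eq_add_neg,
    sub_eq_zero, inv_smul_eq_iff₀ hq, Matrix.smul_apply, mul_diagonal, diagonal_mul]

theorem mul_inv_smul_add_neg_mul_eq_zero_iff {q : K} (hq : q ≠ 0) (u : Matrix m m A) (b : A) :
    (b • 1) * (q⁻¹ • u) + -u * (b • 1) = 0 ↔ ∀ i j, b * u i j = q • (u i j * b) := by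
  simp only [← Matrix.ext_iff, smul_one_eq_diagonal, mul_smul_comm, neg_mul, ← sub_eq_add_neg,
    sub_eq_zero, inv_smul_eq_iff₀ hq, Matrix.smul_apply, mul_diagonal, diagonal_mul]

theorem unipotentBlock_mul_self_eq_smul_one_iff [Nonempty m] {q : K} (hq : q ≠ 0)
    (u : Matrix m m A) (a b c : A) :
    unipotentBlock q u a b * unipotentBlock q u a b = c • 1 ↔
      (∀ i j, u i j * a = q • (a * u i j)) ∧ (∀ i j, b * u i j = q • (u i j * b)) ∧
      u * u = (c - b * a) • 1 ∧ a * b - b * a = (1 - (q ^ 2)⁻¹) • (c - b * a) := by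
  have lower_right : (b • 1) * (a • 1) + -u * -u = c • 1 ↔ u * u = (c - b * a) • 1 := by
    rw [neg_mul_neg, smul_one_mul, smul_smul, sub_smul, eq_sub_iff_add_eq']
  have upper_left (hu : u * u = (c - b * a) • 1) :
      (q⁻¹ • u) * (q⁻¹ • u) + (a • 1) * (b • 1) = c • 1 ↔
        a * b - b * a = (1 - (q ^ 2)⁻¹) • (c - b * a) := by
    rw [smul_mul_smul_comm, hu, smul_one_mul, smul_smul, ← mul_inv, ← sq, ← smul_assoc, ← add_smul,
      smul_one_matrix_injective.eq_iff, sub_smul, one_smul, ← eq_sub_iff_add_eq',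
      sub_right_comm, sub_left_inj]
  rw [← fromBlocks_one, fromBlocks_smul, smul_zero, unipotentBlock, fromBlocks_multiply,
    fromBlocks_inj, inv_smul_mul_add_mul_neg_eq_zero_iff hq,
    mul_inv_smul_add_neg_mul_eq_zero_iff hq, lower_right]
  constructor
  · rintro ⟨h₁₁, h₁₂, h₂₁, h₂₂⟩
    exact ⟨h₁₂, h₂₁, h₂₂, (upper_left h₂₂).1 h₁₁⟩
  · rintro ⟨h₁₂, h₂₁, h₂₂, h₁₁⟩
    exact ⟨(upper_left h₂₂).2 h₁₁, h₁₂, h₂₁, h₂₂⟩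

end UnipotentBlock

section IndexEquivalences

/-- The identification of the indices of a `2 × 2` block matrix with `Fin (2 ^ (k + 1))` which is
used in `uMat`: the summand selects the block. -/
def blockIndexEquiv (k : ℕ) : Fin (2 ^ k) ⊕ Fin (2 ^ k) ≃ Fin (2 ^ (k + 1)) :=
  finSumFinEquiv.trans (finCongr (by rw [pow_succ, mul_two]))

/-- The identification of the indices of a matrix with `2 × 2` matrix entries with
`Fin (2 ^ (n + 1))`: the position inside an entry is the least significant binary digit. -/
def entryIndexEquiv (n : ℕ) : Fin (2 ^ n) × Fin 2 ≃ Fin (2 ^ (n + 1)) :=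
  finProdFinEquiv.trans (finCongr (by rw [pow_succ]))

theorem blockIndexEquiv_prodCongr_trans_entryIndexEquiv (n : ℕ) :
    ((blockIndexEquiv n).prodCongr (Equiv.refl (Fin 2))).trans (entryIndexEquiv (n + 1)) =
      (Equiv.sumProdDistrib _ _ _).trans
        (((entryIndexEquiv n).sumCongr (entryIndexEquiv n)).trans (blockIndexEquiv (n + 1))) := by
  ext ⟨i | i, s⟩
  · simp [blockIndexEquiv, entryIndexEquiv]
  · simp [blockIndexEquiv, entryIndexEquiv, pow_succ, mul_add, mul_comm, add_assoc]

end IndexEquivalences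

section Unipotent

open Matrix

variable {A : Type*} [Ring A] [Algebra ℂ A] [StarRing A]

theorem uMat_succ (q : ℝ) (x : ℕ → A) (k : ℕ) :
    uMat q x (k + 1) = reindex (blockIndexEquiv k) (blockIndexEquiv k)
      (unipotentBlock (q : ℂ) (uMat q x k) (x (k + 1)) (star (x (k + 1)))) :=
  rfl

theorem uMat_mem_iff {q : ℝ} {x : ℕ → A} (hx0 : star (x 0) = x 0) (S : Submodule ℂ A) (k : ℕ) :
    (∀ i j, uMat q x k i j ∈ S) ↔ ∀ m ≤ k, x m ∈ S ∧ star (x m) ∈ S := by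
  induction k with
  | zero => simp [uMat, hx0]
  | succ k ih =>
    simp only [uMat_succ, reindex_apply, submatrix_apply, Nat.le_succ_iff_eq_or_le]
    rw [← (blockIndexEquiv k).symm.surjective.forall₂
      (p := fun i j => unipotentBlock (q : ℂ) (uMat q x k) _ _ i j ∈ S),
      unipotentBlock_mem_iff, ih, and_comm]
    simp only [forall_eq_or_imp]

theorem uMat_succ_mul_self_eq_smul_one_iff {q : ℝ} (hq : q ≠ 0) (x : ℕ → A) (k : ℕ) (c : A) :
    uMat q x (k + 1) * uMat q x (k + 1) = c • 1 ↔
      (∀ i j, uMat q x k i j * x (k + 1) = (q : ℂ) • (x (k + 1) * uMat q x k i j)) ∧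
      (∀ i j, star (x (k + 1)) * uMat q x k i j =
        (q : ℂ) • (uMat q x k i j * star (x (k + 1)))) ∧
      uMat q x k * uMat q x k = (c - star (x (k + 1)) * x (k + 1)) • 1 ∧
      x (k + 1) * star (x (k + 1)) - star (x (k + 1)) * x (k + 1) =
        (1 - ((q : ℂ) ^ 2)⁻¹) • (c - star (x (k + 1)) * x (k + 1)) := by
  rw [← unipotentBlock_mul_self_eq_smul_one_iff (Complex.ofReal_ne_zero.2 hq), uMat_succ,
    ← (reindex (blockIndexEquiv k) (blockIndexEquiv k)).injective.eq_iff]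
  simp [submatrix_smul]

end Unipotent

section Relations

variable {A : Type*} [Ring A] [Algebra ℂ A] [StarRing A]

/-- The relations of the quantum Euclidean space of dimension `2n + 1` on generators `x₀, …, x_n`,
that is, those of `EvenSphereRel` without the normalization of the radius. As there, `x₀ = x₀*` is
not part of the relations. -/
structure QuantumEuclideanRel (q : ℝ) (n : ℕ) (x : ℕ → A) : Prop where
  mul_eq : ∀ i j : ℕ, i < j → j ≤ n → x i * x j = (q : ℂ) • (x j * x i)
  star_mul_eq : ∀ i j : ℕ, i ≤ n → j ≤ n → i ≠ j →
    star (x i) * x j = (q : ℂ) • (x j * star (x i))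
  mul_star_sub_star_mul : ∀ i : ℕ, 1 ≤ i → i ≤ n →
    x i * star (x i) - star (x i) * x i = (1 - ((q : ℂ) ^ 2)⁻¹) • sEven x (i - 1)

theorem evenSphereRel_iff {q : ℝ} {n : ℕ} {x : ℕ → A} :
    EvenSphereRel q n x ↔ QuantumEuclideanRel q n x ∧ sEven x n = 1 :=
  ⟨fun ⟨h₁, h₂, h₃, h₄⟩ => ⟨⟨h₁, h₂, h₃⟩, h₄⟩, fun ⟨⟨h₁, h₂, h₃⟩, h₄⟩ => ⟨h₁, h₂, h₃, h₄⟩⟩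

theorem quantumEuclideanRel_zero (q : ℝ) (x : ℕ → A) : QuantumEuclideanRel q 0 x where
  mul_eq := by lia
  star_mul_eq := by lia
  mul_star_sub_star_mul := by lia

variable [StarModule ℂ A]

theorem star_mul_star_eq_smul_iff (q : ℝ) (a b : A) :
    star b * star a = (q : ℂ) • (star a * star b) ↔ a * b = (q : ℂ) • (b * a) := by
  rw [← star_inj (x := a * b)]
  simp

theorem quantumEuclideanRel_succ_iff {q : ℝ} {n : ℕ} {x : ℕ → A} :
    QuantumEuclideanRel q (n + 1) x ↔ QuantumEuclideanRel q n x ∧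
      (∀ m ≤ n, x m * x (n + 1) = (q : ℂ) • (x (n + 1) * x m) ∧
        star (x m) * x (n + 1) = (q : ℂ) • (x (n + 1) * star (x m))) ∧
      x (n + 1) * star (x (n + 1)) - star (x (n + 1)) * x (n + 1) =
        (1 - ((q : ℂ) ^ 2)⁻¹) • sEven x n := by
  constructor
  · rintro ⟨hmul, hstar, hcomm⟩
    exact ⟨⟨fun i j hij hj => hmul i j hij (by lia),
        fun i j hi hj => hstar i j (by lia) (by lia), fun i hi hn => hcomm i hi (by lia)⟩,
      fun m hm => ⟨hmul m _ (by lia) le_rfl, hstar m _ (by lia) le_rfl (by lia)⟩,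
      hcomm (n + 1) (by lia) le_rfl⟩
  · rintro ⟨⟨hmul, hstar, hcomm⟩, hlast, hcomm_last⟩
    refine ⟨fun i j hij hj => ?_, fun i j hi hj hij => ?_, fun i hi hn => ?_⟩
    · obtain rfl | hj := Nat.le_succ_iff_eq_or_le.1 hj
      · exact (hlast i (by lia)).1
      · exact hmul i j hij hj
    · obtain rfl | hj := Nat.le_succ_iff_eq_or_le.1 hj
      · exact (hlast i (by lia)).2
      obtain rfl | hi := Nat.le_succ_iff_eq_or_le.1 hi
      · simpa only [star_star] using (star_mul_star_eq_smul_iff q _ _).2 (hlast j hj).2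
      · exact hstar i j hi hj hij
    · obtain rfl | hn := Nat.le_succ_iff_eq_or_le.1 hn
      · exact hcomm_last
      · exact hcomm i hi hn

end Relations

section Unipotency

variable {A : Type*} [Ring A] [Algebra ℂ A] [StarRing A]

theorem uMat_mul_eq_smul_iff {q : ℝ} {x : ℕ → A} (hx0 : star (x 0) = x 0) (k : ℕ) (b : A) :
    (∀ i j, uMat q x k i j * b = (q : ℂ) • (b * uMat q x k i j)) ↔
      ∀ m ≤ k, x m * b = (q : ℂ) • (b * x m) ∧
        star (x m) * b = (q : ℂ) • (b * star (x m)) :=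
  uMat_mem_iff hx0
    (LinearMap.eqLocus (LinearMap.mulRight ℂ b) ((q : ℂ) • LinearMap.mulLeft ℂ b)) k

variable [StarModule ℂ A]

theorem star_mul_uMat_eq_smul_iff {q : ℝ} {x : ℕ → A} (hx0 : star (x 0) = x 0) (k : ℕ) (b : A) :
    (∀ i j, star b * uMat q x k i j = (q : ℂ) • (uMat q x k i j * star b)) ↔
      ∀ m ≤ k, x m * b = (q : ℂ) • (b * x m) ∧
        star (x m) * b = (q : ℂ) • (b * star (x m)) := by
  refine (uMat_mem_iff hx0 (LinearMap.eqLocus (LinearMap.mulLeft ℂ (star b))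
    ((q : ℂ) • LinearMap.mulRight ℂ (star b))) k).trans (forall₂_congr fun m _ => ?_)
  rw [← star_mul_star_eq_smul_iff q (x m), ← star_mul_star_eq_smul_iff q (star (x m)), star_star,
    and_comm]
  rfl

theorem uMat_mul_self_eq_smul_one_iff {q : ℝ} (hq : q ≠ 0) {x : ℕ → A} (hx0 : star (x 0) = x 0)
    (n : ℕ) (c : A) :
    uMat q x n * uMat q x n = c • 1 ↔ QuantumEuclideanRel q n x ∧ sEven x n = c := by
  induction n generalizing c with
  | zero =>
    have : Nonempty (Fin (2 ^ 0)) := ⟨0⟩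
    have uMat_zero : uMat q x 0 = x 0 • 1 := by
      ext i j
      obtain rfl : i = j := Subsingleton.elim (α := Fin 1) i j
      simp [uMat]
    rw [uMat_zero, smul_one_mul, smul_smul, smul_one_matrix_injective.eq_iff, sEven,
      and_iff_right (quantumEuclideanRel_zero q x)]
  | succ n ih =>
    rw [uMat_succ_mul_self_eq_smul_one_iff hq, uMat_mul_eq_smul_iff hx0,
      star_mul_uMat_eq_smul_iff hx0, ih, quantumEuclideanRel_succ_iff, sEven,
      ← eq_sub_iff_add_eq]
    constructor
    · rintro ⟨hlast, -, ⟨hrel, hs⟩, hcomm⟩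
      exact ⟨⟨hrel, hlast, hs ▸ hcomm⟩, hs⟩
    · rintro ⟨⟨hrel, hlast, hcomm⟩, hs⟩
      exact ⟨hlast, hlast, ⟨hrel, hs⟩, hs ▸ hcomm⟩

theorem uMat_mul_self_eq_one_iff {q : ℝ} (hq : q ≠ 0) {x : ℕ → A} (hx0 : star (x 0) = x 0)
    (n : ℕ) : uMat q x n * uMat q x n = 1 ↔ EvenSphereRel q n x := by
  rw [evenSphereRel_iff, ← uMat_mul_self_eq_smul_one_iff hq hx0, one_smul]

end Unipotency

section Substitution

variable {A : Type*} [Ring A]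

/-- The generators of the even sphere in the place of those of the odd sphere: the substitution
`x₁ ↦ x₀`, `x_{j+1} ↦ x_j`, together with the `x₀ ↦ 0` that turns `u_{(2n+2)}` into
`u_{(2n+1)}`. -/
def oddSubst (x : ℕ → A) (i : ℕ) : A :=
  if i = 0 then 0 else if i = 1 then x 0 else x (i - 1)

theorem oddSubst_zero (x : ℕ → A) : oddSubst x 0 = 0 :=
  rfl

theorem oddSubst_succ (x : ℕ → A) (i : ℕ) : oddSubst x (i + 1) = x i := by
  cases i <;> rfl

variable [StarRing A]

theorem sEven_oddSubst_succ {x : ℕ → A} (hx0 : star (x 0) = x 0) (i : ℕ) :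
    sEven (oddSubst x) (i + 1) = sEven x i := by
  induction i with
  | zero => simp [sEven, oddSubst_zero, oddSubst_succ, hx0]
  | succ i ih => rw [sEven, ih, oddSubst_succ, sEven]

variable [Algebra ℂ A]

theorem quantumEuclideanRel_oddSubst_iff {q : ℝ} {n : ℕ} {x : ℕ → A} (hx0 : star (x 0) = x 0) :
    QuantumEuclideanRel q (n + 1) (oddSubst x) ↔ QuantumEuclideanRel q n x := by
  constructor
  · rintro ⟨hmul, hstar, hcomm⟩
    refine ⟨fun i j hij hj => ?_, fun i j hi hj hij => ?_, fun i hi hn => ?_⟩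
    · simpa only [oddSubst_succ] using hmul (i + 1) (j + 1) (by lia) (by lia)
    · simpa only [oddSubst_succ] using hstar (i + 1) (j + 1) (by lia) (by lia) (by lia)
    · obtain ⟨i, rfl⟩ := Nat.exists_eq_add_of_le' hi
      simpa only [oddSubst_succ, Nat.add_sub_cancel, sEven_oddSubst_succ hx0] using
        hcomm (i + 1 + 1) (by lia) (by lia)
  · rintro ⟨hmul, hstar, hcomm⟩
    refine ⟨fun i j hij hj => ?_, fun i j hi hj hij => ?_, fun i hi hn => ?_⟩
    · obtain ⟨j, rfl⟩ := Nat.exists_eq_add_of_le' (Nat.one_le_of_lt hij)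
      rcases i with _ | i
      · simp [oddSubst_zero]
      · simpa only [oddSubst_succ] using hmul i j (by lia) (by lia)
    · rcases i with _ | i
      · simp [oddSubst_zero]
      rcases j with _ | j
      · simp [oddSubst_zero]
      · simpa only [oddSubst_succ] using hstar i j (by lia) (by lia) (by lia)
    · obtain ⟨i, rfl⟩ := Nat.exists_eq_add_of_le' hi
      rcases i with _ | i
      · simp [oddSubst_succ, oddSubst_zero, hx0, sEven]
      · simpa only [oddSubst_succ, Nat.add_sub_cancel, sEven_oddSubst_succ hx0] using
          hcomm (i + 1) (by lia) (by lia)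

theorem evenSphereRel_oddSubst_iff {q : ℝ} {n : ℕ} {x : ℕ → A} (hx0 : star (x 0) = x 0) :
    EvenSphereRel q (n + 1) (oddSubst x) ↔ EvenSphereRel q n x := by
  rw [evenSphereRel_iff, evenSphereRel_iff, quantumEuclideanRel_oddSubst_iff hx0,
    sEven_oddSubst_succ hx0]

end Substitution

section Kronecker

open Matrix

variable {A : Type*} [Ring A] [Algebra ℂ A] [StarRing A]

/-- Generators over the `2 × 2` matrices: at the bottom the unipotent `u_{(2)}` of `x`, above it
the scalar matrices of the remaining generators `x₂, x₃, …`. -/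
noncomputable def matrixGenerators (q : ℝ) (x : ℕ → A) : ℕ → Matrix (Fin 2) (Fin 2) A
  | 0 => !![(q : ℂ)⁻¹ • x 0, x 1; star (x 1), -x 0]
  | j + 1 => x (j + 2) • 1

theorem matrixGenerators_succ (q : ℝ) (x : ℕ → A) (j : ℕ) :
    matrixGenerators q x (j + 1) = x (j + 2) • 1 :=
  rfl

theorem uMat_succ_eq_reindex_comp (q : ℝ) (x : ℕ → A) (n : ℕ) :
    uMat q x (n + 1) = reindex (entryIndexEquiv n) (entryIndexEquiv n)
      (comp _ _ _ _ A (uMat q (matrixGenerators q x) n)) := by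
  induction n with
  | zero =>
    ext i j
    fin_cases i <;> fin_cases j
    · rfl
    · exact mul_one (x 1)
    · exact mul_one (star (x 1))
    · rfl
  | succ n ih =>
    have comp_uMat_succ :
        comp _ _ _ _ A (uMat q (matrixGenerators q x) (n + 1)) =
          reindex ((blockIndexEquiv n).prodCongr (.refl _))
            ((blockIndexEquiv n).prodCongr (.refl _))
            (comp _ _ _ _ A (unipotentBlock (q : ℂ) (uMat q (matrixGenerators q x) n)
              (x (n + 2) • 1) (star (x (n + 2)) • 1))) := by
      rw [uMat_succ, matrixGenerators_succ, star_smul_one_matrix]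
      rfl
    rw [uMat_succ, ih, unipotentBlock_reindex, ← reindex_comp_unipotentBlock, comp_uMat_succ]
    simp only [← Equiv.trans_apply, reindex_trans,
      blockIndexEquiv_prodCongr_trans_entryIndexEquiv, Equiv.trans_assoc]

theorem matrixGenerators_oddSubst {x : ℕ → A} (hx0 : star (x 0) = x 0) (q : ℝ) :
    matrixGenerators q (oddSubst x) =
      fun j => if j = 0 then !![0, x 0; x 0, 0] else x j • (1 : Matrix (Fin 2) (Fin 2) A) := by
  funext j
  cases j <;> simp [matrixGenerators, oddSubst_zero, oddSubst_succ, hx0]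

end Kronecker

/-- Substituting `x₁ ↦ x₀ (= x₁*)` and `x_{j+1} ↦ x_j` in the odd unipotent `u_{(2n+1)}`
yields the matrix obtained from `u_{(2n)}` by the entrywise Kronecker substitution
`x₀ ↦ [[0,x₀],[x₀,0]]`, `x_j ↦ x_j · I₂`; consequently the unipotency of this matrix is
equivalent to the `S^{2n}_q` relations (so `A(S^{2n}_q)` is the quotient of
`A(S^{2n+1}_q)` by the *-ideal generated by `x₁ - x₁*`). -/
theorem uMat_substitution_even_in_odd {A : Type*} [Ring A] [Algebra ℂ A] [StarRing A]
    [StarModule ℂ A] (q : ℝ) (hq : q ≠ 0) (n : ℕ) (hn : 1 ≤ n) (x : ℕ → A)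
    (hx0 : star (x 0) = x 0) :
    (uMat q (fun i => if i = 0 then 0 else if i = 1 then x 0 else x (i - 1)) (n + 1) =
      Matrix.reindex (finProdFinEquiv.trans (finCongr (by rw [pow_succ])))
        (finProdFinEquiv.trans (finCongr (by rw [pow_succ])))
        (Matrix.of fun (p r : Fin (2 ^ n) × Fin 2) =>
          uMat q (fun j => if j = 0 then !![0, x 0; x 0, 0]
            else x j • (1 : Matrix (Fin 2) (Fin 2) A)) n p.1 r.1 p.2 r.2)) ∧
    (uMat q (fun i => if i = 0 then 0 else if i = 1 then x 0 else x (i - 1)) (n + 1) *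
        uMat q (fun i => if i = 0 then 0 else if i = 1 then x 0 else x (i - 1)) (n + 1) = 1 ↔
      EvenSphereRel q n x) := by
  constructor
  · rw [← matrixGenerators_oddSubst hx0 q]
    exact uMat_succ_eq_reindex_comp q (oddSubst x) n
  · calc uMat q (oddSubst x) (n + 1) * uMat q (oddSubst x) (n + 1) = 1
      _ ↔ EvenSphereRel q (n + 1) (oddSubst x) :=
        uMat_mul_self_eq_one_iff hq (by rw [oddSubst_zero, star_zero]) (n + 1)
      _ ↔ EvenSphereRel q n x := evenSphereRel_oddSubst_iff hx0
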